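/- arXiv:2310.19486 — 3 statements merged into one kernel-verified Lean document; each statement's English description precedes it below -/
import Mathlib

section
/- Let n and k be relatively prime integers with 2 ≤ k ≤ n−1, and for 1 ≤ i ≤ k−1 set a_i = ⌈n·i/k⌉. Then in the braid group B_n the element δ^k is conjugate to δ·U_{a_1}·U_{a_2}·⋯·U_{a_{k−1}}; that is, there exists x ∈ B_n with x⁻¹·δ^k·x = δ·U_{a_1}·⋯·U_{a_{k−1}}. -/
/-- The braid relations on `m` generators (so that `σ_1, …, σ_m` present the braid
group `B_{m+1}`); generator `i : Fin m` corresponds to `σ_{i+1}`. -/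
def braidRels (m : ℕ) : Set (FreeGroup (Fin m)) :=
  {r | ∃ i j : Fin m, (i.val + 2 ≤ j.val ∨ j.val + 2 ≤ i.val) ∧
        r = FreeGroup.of i * FreeGroup.of j * (FreeGroup.of i)⁻¹ * (FreeGroup.of j)⁻¹}
  ∪ {r | ∃ i j : Fin m, (i.val + 1 = j.val ∨ j.val + 1 = i.val) ∧
        r = FreeGroup.of i * FreeGroup.of j * FreeGroup.of i *
            (FreeGroup.of j * FreeGroup.of i * FreeGroup.of j)⁻¹}

/-- The braid group `B n` on `n` strands, presented with generators `σ_1, …, σ_{n-1}`. -/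
abbrev BraidGroup (n : ℕ) : Type := PresentedGroup (braidRels (n - 1))

namespace BraidGroup

/-- The Artin generator `σ_i` of `B n` for `1 ≤ i ≤ n - 1` (junk value `1` otherwise). -/
def σ (n i : ℕ) : BraidGroup n :=
  if h : 1 ≤ i ∧ i ≤ n - 1 then PresentedGroup.of (⟨i - 1, by omega⟩ : Fin (n - 1)) else 1

/-- `D n k = σ_{k-1} ⋯ σ_2 σ_1` in `B n`; `D n 1 = 1`. -/
def D (n k : ℕ) : BraidGroup n :=
  (((List.range (k - 1)).reverse).map (fun j => σ n (j + 1))).prod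

/-- `E n k = σ_1 σ_2 ⋯ σ_{k-1}` in `B n`; `E n 1 = 1`. -/
def E (n k : ℕ) : BraidGroup n :=
  ((List.range (k - 1)).map (fun j => σ n (j + 1))).prod

/-- `U n k = D n k * E n k` in `B n`; `U n 1 = 1`. -/
def U (n k : ℕ) : BraidGroup n := D n k * E n k

/-- `δ = σ_{n-1} σ_{n-2} ⋯ σ_1` in `B n`. -/
def delta (n : ℕ) : BraidGroup n := D n n

/-- `Δ = σ_1 (σ_2 σ_1) ⋯ (σ_{n-1} ⋯ σ_1) = D_2 D_3 ⋯ D_n` in `B n`. -/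
def Delta (n : ℕ) : BraidGroup n :=
  ((List.range (n - 1)).map (fun j => D n (j + 2))).prod

end BraidGroup

namespace BraidGroup

variable {n : ℕ}

lemma commute_σ {i j : ℕ} (h : i + 2 ≤ j) : Commute (σ n i) (σ n j) := by
  unfold σ
  split_ifs with hi hj
  · have hr : PresentedGroup.mk (braidRels (n - 1)) _ = 1 :=
      PresentedGroup.one_of_mem (Or.inl ⟨⟨i - 1, by omega⟩, ⟨j - 1, by omega⟩,
        Or.inl (by simp only; omega), rfl⟩)
    rw [map_mul, map_mul, map_mul, map_inv, map_inv, mul_inv_eq_one, mul_inv_eq_iff_eq_mul] at hr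
    exact hr
  · exact Commute.one_right _
  · exact Commute.one_left _
  · exact Commute.one_left _

lemma σ_braid {i : ℕ} (hi : 1 ≤ i) (hin : i + 1 < n) :
    σ n i * σ n (i + 1) * σ n i = σ n (i + 1) * σ n i * σ n (i + 1) := by
  unfold σ
  rw [dif_pos (by omega), dif_pos (by omega)]
  have hr : PresentedGroup.mk (braidRels (n - 1)) _ = 1 :=
    PresentedGroup.one_of_mem (Or.inr ⟨⟨i - 1, by omega⟩, ⟨i + 1 - 1, by omega⟩,
      Or.inl (by simp only; omega), rfl⟩)
  rw [map_mul, map_inv, mul_inv_eq_one] at hr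
  simp only [map_mul] at hr
  exact hr

lemma D_one : D n 1 = 1 := by simp [D]

lemma E_one : E n 1 = 1 := by simp [E]

lemma D_succ {m : ℕ} (hm : 1 ≤ m) : D n (m + 1) = σ n m * D n m := by
  obtain ⟨p, rfl⟩ := Nat.exists_eq_add_of_le' hm
  simp [D, List.range_succ]

lemma E_succ {m : ℕ} (hm : 1 ≤ m) : E n (m + 1) = E n m * σ n m := by
  obtain ⟨p, rfl⟩ := Nat.exists_eq_add_of_le' hm
  simp [E, List.range_succ]

lemma commute_D_σ {m j : ℕ} (hm : 1 ≤ m) (h : m + 1 ≤ j) : Commute (D n m) (σ n j) := by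
  induction m, hm using Nat.le_induction with
  | base => rw [D_one]; exact Commute.one_left _
  | succ m hm ih => rw [D_succ hm]; exact (commute_σ (by omega)).mul_left (ih (by omega))

lemma commute_E_σ {m j : ℕ} (hm : 1 ≤ m) (h : m + 1 ≤ j) : Commute (E n m) (σ n j) := by
  induction m, hm using Nat.le_induction with
  | base => rw [E_one]; exact Commute.one_left _
  | succ m hm ih => rw [E_succ hm]; exact (ih (by omega)).mul_left (commute_σ (by omega))

lemma σ_mul_D {i m : ℕ} (hi : 1 ≤ i) (him : i + 2 ≤ m) (hmn : m ≤ n) :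
    σ n i * D n m = D n m * σ n (i + 1) := by
  induction m, him using Nat.le_induction with
  | base =>
    rw [D_succ (m := i + 1) (by omega), D_succ hi]
    calc σ n i * (σ n (i + 1) * (σ n i * D n i))
        = (σ n i * σ n (i + 1) * σ n i) * D n i := by group
      _ = σ n (i + 1) * σ n i * (σ n (i + 1) * D n i) := by
        rw [σ_braid hi (by omega)]; group
      _ = _ := by rw [← (commute_D_σ hi le_rfl).eq]; group
  | succ m hm ih =>
    rw [D_succ (by omega), ← mul_assoc, (commute_σ hm).eq, mul_assoc, ih (by omega), mul_assoc]

lemma E_mul_σ {i m : ℕ} (hi : 1 ≤ i) (him : i + 2 ≤ m) (hmn : m ≤ n) :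
    E n m * σ n i = σ n (i + 1) * E n m := by
  induction m, him using Nat.le_induction with
  | base =>
    rw [E_succ (m := i + 1) (by omega), E_succ hi]
    calc E n i * σ n i * σ n (i + 1) * σ n i
        = E n i * (σ n i * σ n (i + 1) * σ n i) := by group
      _ = (E n i * σ n (i + 1)) * σ n i * σ n (i + 1) := by
        rw [σ_braid hi (by omega)]; group
      _ = _ := by rw [(commute_E_σ hi le_rfl).eq]; group
  | succ m hm ih =>
    rw [E_succ (by omega), mul_assoc, ← (commute_σ hm).eq, ← mul_assoc, ih (by omega), mul_assoc]

lemma commute_σ_U {i m : ℕ} (hi : 1 ≤ i) (him : i + 2 ≤ m) (hmn : m ≤ n) :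
    Commute (σ n i) (U n m) := by
  change σ n i * (D n m * E n m) = D n m * E n m * σ n i
  rw [← mul_assoc, σ_mul_D hi him hmn, mul_assoc, mul_assoc, E_mul_σ hi him hmn]

/-- `S n a b = σ_a σ_{a+1} ⋯ σ_{b-1}` in `B n`. -/
def S (n a b : ℕ) : BraidGroup n :=
  ((List.range' a (b - a)).map (σ n)).prod

lemma S_self (a : ℕ) : S n a a = 1 := by simp [S]

lemma S_succ {a b : ℕ} (h : a ≤ b) : S n a (b + 1) = S n a b * σ n b := by
  obtain ⟨c, rfl⟩ := Nat.exists_eq_add_of_le h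
  rw [S, S, show a + c + 1 - a = c + 1 by omega, show a + c - a = c by omega,
    List.range'_1_concat]
  simp

lemma E_eq_S {m : ℕ} (hm : 1 ≤ m) : E n m = S n 1 m := by
  induction m, hm using Nat.le_induction with
  | base => rw [E_one, S_self]
  | succ m hm ih => rw [E_succ hm, S_succ hm, ih]

lemma S_mul_D {a b m : ℕ} (ha : 1 ≤ a) (hab : a ≤ b) (hbm : b + 1 ≤ m) (hmn : m ≤ n) :
    S n a b * D n m = D n m * S n (a + 1) (b + 1) := by
  induction b, hab using Nat.le_induction with
  | base => rw [S_self, S_self, one_mul, mul_one]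
  | succ b hab ih =>
    rw [S_succ hab, S_succ (by omega), mul_assoc, σ_mul_D (by omega) (by omega) hmn,
      ← mul_assoc, ih (by omega), mul_assoc]

lemma commute_S_U {a b m : ℕ} (ha : 1 ≤ a) (hab : a ≤ b) (hbm : b + 1 ≤ m) (hmn : m ≤ n) :
    Commute (S n a b) (U n m) := by
  induction b, hab using Nat.le_induction with
  | base => rw [S_self]; exact Commute.one_left _
  | succ b hab ih =>
    rw [S_succ hab]
    exact (ih (by omega)).mul_left (commute_σ_U (by omega) (by omega) hmn)

lemma commute_D_U {b m : ℕ} (hb : 1 ≤ b) (hbm : b + 1 ≤ m) (hmn : m ≤ n) :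
    Commute (D n b) (U n m) := by
  induction b, hb using Nat.le_induction with
  | base => rw [D_one]; exact Commute.one_left _
  | succ b hb ih =>
    rw [D_succ hb]
    exact (commute_σ_U (by omega) (by omega) hmn).mul_left (ih (by omega))

lemma S_mul_D_self {a m : ℕ} (ha : 1 ≤ a) (ham : a ≤ m) (hmn : m + 1 ≤ n) :
    S n a (m + 1) * D n m = D n (m + 1) * S n (a + 1) (m + 1) := by
  rw [S_succ ham, mul_assoc, ← D_succ (by omega), S_mul_D ha ham le_rfl hmn]

lemma S_mul_D_pow {a s m : ℕ} (ha : 1 ≤ a) (h : a + s ≤ m + 1) (hmn : m + 1 ≤ n) :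
    S n a (m + 1) * D n m ^ s = D n (m + 1) ^ s * S n (a + s) (m + 1) := by
  induction s with
  | zero => simp
  | succ s ih =>
    rw [pow_succ, ← mul_assoc, ih (by omega), mul_assoc,
      S_mul_D_self (by omega) (by omega) hmn, ← mul_assoc, ← pow_succ, add_assoc]

lemma D_pow_mul_U {q m : ℕ} (hq : q ≤ m) (hm : 1 ≤ m) (hmn : m + 1 ≤ n) :
    D n m ^ q * U n (m + 1) = D n (m + 1) ^ (q + 1) * S n (q + 1) (m + 1) := by
  induction q with
  | zero => simp [U, E_eq_S]
  | succ q ih =>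
    rw [pow_succ, mul_assoc, (commute_D_U hm le_rfl hmn).eq, ← mul_assoc, ih (by omega),
      mul_assoc, S_mul_D_self (by omega) (by omega) hmn, ← mul_assoc, ← pow_succ]

lemma S_mul_D_pow_mul_U {a t q m : ℕ} (ha : 1 ≤ a) (ham : a ≤ m) (hm : a + t = m + q)
    (hq : q ≤ m) (hmn : m + 1 ≤ n) :
    S n (a + 1) (m + 1) * D n m ^ t * U n (m + 1) =
      D n (m + 1) ^ (t + 1) * S n (q + 1) (m + 1) := by
  have ht : t = (m - a) + q := by omega
  rw [ht, pow_add, ← mul_assoc, S_mul_D_pow (by omega) (by omega) hmn,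
    show a + 1 + (m - a) = m + 1 by omega, S_self, mul_one, mul_assoc,
    D_pow_mul_U hq (by omega) hmn, ← mul_assoc, ← pow_add, add_assoc]

/-- The number of `i ≥ 1` with `n * i < k * m`. -/
def wraps (n k m : ℕ) : ℕ := (k * m - 1) / n

/-- The rank of `k * m` modulo `n` among `k, 2 * k, …, m * k` modulo `n`,
with residues taken in `{1, …, n}`. -/
def rank (n k m : ℕ) : ℕ :=
  m + 2 * ∑ i ∈ Finset.range m, wraps n k i - (m - 1) * wraps n k m

lemma wraps_add_le {k i j : ℕ} (hn : 0 < n) :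
    wraps n k i + wraps n k j ≤ wraps n k (i + j) := by
  unfold wraps
  rw [Nat.le_div_iff_mul_le hn, add_mul, mul_add]
  have := Nat.div_mul_le_self (k * i - 1) n
  have := Nat.div_mul_le_self (k * j - 1) n
  omega

lemma wraps_add_le_add_one {k i j : ℕ} (hn : 0 < n) :
    wraps n k (i + j) ≤ wraps n k i + wraps n k j + 1 := by
  unfold wraps
  rw [← Nat.lt_add_one_iff, Nat.div_lt_iff_lt_mul hn, mul_add]
  simp only [add_mul, one_mul]
  have := Nat.lt_div_mul_add (a := k * i - 1) hn
  have := Nat.lt_div_mul_add (a := k * j - 1) hn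
  omega

lemma wraps_zero {k : ℕ} : wraps n k 0 = 0 := by simp [wraps]

lemma wraps_one {k : ℕ} (hkn : k < n) : wraps n k 1 = 0 :=
  Nat.div_eq_of_lt (by omega)

lemma two_mul_sum_wraps (k p : ℕ) :
    2 * ∑ i ∈ Finset.range (p + 1), wraps n k i =
      ∑ i ∈ Finset.range p, (wraps n k (i + 1) + wraps n k (p - i)) := by
  have hreflect : ∑ i ∈ Finset.range p, wraps n k (p - i) =
      ∑ i ∈ Finset.range p, wraps n k (i + 1) := by
    rw [← Finset.sum_range_reflect]
    refine Finset.sum_congr rfl fun i hi => ?_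
    have := Finset.mem_range.1 hi
    congr 1
    omega
  rw [Finset.sum_add_distrib, Finset.sum_range_succ', wraps_zero, hreflect, add_zero, two_mul]

lemma two_mul_sum_wraps_le {k p : ℕ} (hn : 0 < n) :
    2 * ∑ i ∈ Finset.range (p + 1), wraps n k i ≤ p * wraps n k (p + 1) := by
  rw [two_mul_sum_wraps]
  refine (Finset.sum_le_card_nsmul _ _ (wraps n k (p + 1)) fun i hi => ?_).trans (by simp)
  have := Finset.mem_range.1 hi
  rw [show p + 1 = (i + 1) + (p - i) by omega]
  exact wraps_add_le hn

lemma le_two_mul_sum_wraps {k p : ℕ} (hn : 0 < n) :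
    p * wraps n k (p + 1) ≤ p + 2 * ∑ i ∈ Finset.range (p + 1), wraps n k i := by
  rw [two_mul_sum_wraps]
  have : ∑ i ∈ Finset.range p, wraps n k (p + 1) ≤
      ∑ i ∈ Finset.range p, (wraps n k (i + 1) + wraps n k (p - i) + 1) := by
    refine Finset.sum_le_sum fun i hi => ?_
    have := Finset.mem_range.1 hi
    rw [show p + 1 = (i + 1) + (p - i) by omega]
    exact wraps_add_le_add_one hn
  rw [Finset.sum_add_distrib (g := fun _ => 1)] at this
  simp only [Finset.sum_const, Finset.card_range, smul_eq_mul, mul_one] at this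
  omega

lemma one_le_rank {k m : ℕ} (hn : 0 < n) (hm : 1 ≤ m) : 1 ≤ rank n k m := by
  obtain ⟨p, rfl⟩ := Nat.exists_eq_add_of_le' hm
  have := le_two_mul_sum_wraps (k := k) (p := p) hn
  rw [rank, Nat.add_sub_cancel]
  omega

lemma rank_le {k m : ℕ} (hn : 0 < n) (hm : 1 ≤ m) : rank n k m ≤ m := by
  obtain ⟨p, rfl⟩ := Nat.exists_eq_add_of_le' hm
  have := two_mul_sum_wraps_le (k := k) (p := p) hn
  rw [rank, Nat.add_sub_cancel]
  omega

lemma rank_succ {k m : ℕ} (hn : 0 < n) (hm : 1 ≤ m) :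
    rank n k (m + 1) + m * wraps n k (m + 1) =
      rank n k m + m * wraps n k m + wraps n k m + 1 := by
  obtain ⟨p, rfl⟩ := Nat.exists_eq_add_of_le' hm
  have h₁ := le_two_mul_sum_wraps (k := k) (p := p) hn
  have h₂ := le_two_mul_sum_wraps (k := k) (p := p + 1) hn
  rw [rank, rank, Nat.add_sub_cancel, Nat.add_sub_cancel]
  rw [Finset.sum_range_succ] at h₂ ⊢
  rw [add_mul p 1 (wraps n k (p + 1))]
  omega

lemma wraps_self {k : ℕ} (hn : 0 < n) (hk : 1 ≤ k) : wraps n k n = k - 1 := by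
  obtain ⟨p, rfl⟩ := Nat.exists_eq_add_of_le' hk
  unfold wraps
  rw [Nat.add_sub_cancel, Nat.div_eq_iff hn]
  have : (p + 1) * n = p * n + n := by ring
  omega

lemma wraps_add_of_coprime {k i j : ℕ} (hk : 1 ≤ k) (hcop : Nat.Coprime n k)
    (hi : 1 ≤ i) (hj : 1 ≤ j) (h : i + j = n) :
    wraps n k n ≤ wraps n k i + wraps n k j := by
  have hn : 0 < n := by omega
  have hlt {l : ℕ} (hl : 1 ≤ l) (hln : l < n) : k * l < (wraps n k l + 1) * n := by
    have h₁ : k * l - 1 < (wraps n k l + 1) * n := by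
      rw [add_mul, one_mul]; exact Nat.lt_div_mul_add hn
    have h₂ : k * l ≠ (wraps n k l + 1) * n := fun h =>
      absurd (Nat.le_of_dvd hl (hcop.dvd_of_dvd_mul_left (h ▸ dvd_mul_left n _))) (by omega)
    omega
  have h₁ := hlt hi (by omega)
  have h₂ := hlt hj (by omega)
  rw [wraps_self hn hk]
  have : k * n < (wraps n k i + wraps n k j + 2) * n := by
    calc k * n = k * i + k * j := by rw [← mul_add, h]
      _ < _ := by nlinarith
  have := Nat.lt_of_mul_lt_mul_right this
  omega

lemma rank_self {k : ℕ} (hn : 0 < n) (hk : 1 ≤ k) (hcop : Nat.Coprime n k) :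
    rank n k n = n := by
  refine (rank_le hn hn).antisymm ?_
  have : (n - 1) * wraps n k n ≤ 2 * ∑ i ∈ Finset.range n, wraps n k i := by
    obtain ⟨p, rfl⟩ := Nat.exists_eq_add_of_le' (show 1 ≤ n from hn)
    rw [two_mul_sum_wraps, Nat.add_sub_cancel]
    refine le_trans (by simp) (Finset.card_nsmul_le_sum _ _ (wraps (p + 1) k (p + 1))
      fun i hi => ?_)
    have := Finset.mem_range.1 hi
    exact wraps_add_of_coprime hk hcop (by omega) (by omega) (by omega)
  rw [rank]
  omega

/-- The braid sorting the first `m` strands by `k * i` modulo `n`. -/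
def sorter (n k : ℕ) : ℕ → BraidGroup n
  | 0 => 1
  | m + 1 => S n (rank n k (m + 1)) (m + 1) * sorter n k m

/-- The image of `sorter n k m` under the shift `σ_i ↦ σ_{i+1}`. -/
def shiftedSorter (n k : ℕ) : ℕ → BraidGroup n
  | 0 => 1
  | m + 1 => S n (rank n k (m + 1) + 1) (m + 2) * shiftedSorter n k m

lemma sorter_mul_delta {k m : ℕ} (hmn : m + 1 ≤ n) :
    sorter n k m * delta n = delta n * shiftedSorter n k m := by
  induction m with
  | zero => simp [sorter, shiftedSorter]
  | succ m ih =>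
    rw [sorter, shiftedSorter, mul_assoc, ih (by omega), ← mul_assoc, delta,
      S_mul_D (one_le_rank (by omega) (by omega)) (rank_le (by omega) (by omega)) hmn le_rfl,
      mul_assoc]

lemma commute_sorter_U {k m l : ℕ} (hml : m + 1 ≤ l) (hln : l ≤ n) :
    Commute (sorter n k m) (U n l) := by
  induction m with
  | zero => exact Commute.one_left _
  | succ m ih =>
    exact (commute_S_U (one_le_rank (by omega) (by omega)) (rank_le (by omega) (by omega))
      hml hln).mul_left (ih (by omega))

lemma D_pow_mul_sorter {k m : ℕ} (hkn : k < n) (a : ℕ → ℕ)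
    (ha : ∀ m, m + 1 ≤ n → wraps n k (m + 1) = wraps n k m + 1 → a (wraps n k (m + 1)) = m + 1)
    (hmn : m + 1 ≤ n) :
    D n (m + 1) ^ wraps n k (m + 1) * sorter n k (m + 1) =
      shiftedSorter n k m *
        ((List.range (wraps n k (m + 1))).map (fun j => U n (a (j + 1)))).prod := by
  induction m with
  | zero =>
    have h : rank n k 1 = 1 :=
      (rank_le (by omega) le_rfl).antisymm (one_le_rank (by omega) le_rfl)
    simp [sorter, shiftedSorter, wraps_one hkn, h, S_self]
  | succ m ih =>
    have hn : 0 < n := by omega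
    have h₁ := one_le_rank (k := k) (m := m + 1) hn (by omega)
    have h₂ := rank_le (k := k) (m := m + 1) hn (by omega)
    have h₁' := one_le_rank (k := k) (m := m + 1 + 1) hn (by omega)
    have h₂' := rank_le (k := k) (m := m + 1 + 1) hn (by omega)
    have hr := rank_succ (k := k) (m := m + 1) hn (by omega)
    have ih := ih (by omega)
    have hle : wraps n k (m + 1) ≤ wraps n k (m + 1 + 1) :=
      le_trans (Nat.le_add_right _ _) (wraps_add_le hn)
    have hge : wraps n k (m + 1 + 1) ≤ wraps n k (m + 1) + 1 := by
      simpa [wraps_one hkn] using wraps_add_le_add_one (k := k) (i := m + 1) (j := 1) hn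
    rw [sorter, shiftedSorter, mul_assoc (S n (rank n k (m + 1) + 1) _)]
    rcases hle.eq_or_lt with h | h
    · rw [← h] at hr ⊢
      rw [← ih, ← mul_assoc, ← mul_assoc, S_mul_D_pow (by omega) (by omega) hmn,
        show rank n k (m + 1) + 1 + wraps n k (m + 1) = rank n k (m + 1 + 1) by omega]
    · have h : wraps n k (m + 1 + 1) = wraps n k (m + 1) + 1 := by omega
      have hU := ha (m + 1) hmn h
      rw [h] at hr hU ⊢
      rw [mul_add, mul_one] at hr
      rw [List.range_succ, List.map_append, List.prod_append, List.map_singleton,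
        List.prod_singleton, hU, ← mul_assoc (shiftedSorter n k m), ← ih, mul_assoc (_ ^ _),
        (commute_sorter_U le_rfl hmn).eq, ← mul_assoc, ← mul_assoc, ← mul_assoc,
        S_mul_D_pow_mul_U (q := rank n k (m + 1 + 1) - 1) h₁ h₂ (by omega) (by omega) hmn,
        Nat.sub_add_cancel h₁']

lemma ceil_eq_of_wraps {k m : ℕ} (hk : 1 ≤ k) (hcop : Nat.Coprime n k) (hmn : m + 1 ≤ n)
    (h : wraps n k (m + 1) = wraps n k m + 1) (hlt : wraps n k (m + 1) < k) :
    ⌈((n : ℚ) * (wraps n k (m + 1) : ℕ)) / k⌉ = (m + 1 : ℕ) := by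
  have hn : 0 < n := by omega
  have h₁ : k * m - 1 < wraps n k (m + 1) * n := by
    rw [h, add_mul, one_mul]; exact Nat.lt_div_mul_add hn
  have h₂ : wraps n k (m + 1) * n ≤ k * (m + 1) - 1 := Nat.div_mul_le_self _ n
  have h₃ : k * m ≠ wraps n k (m + 1) * n := fun he =>
    absurd (Nat.le_of_dvd (by omega) (hcop.symm.dvd_of_dvd_mul_right (he ▸ dvd_mul_right k m)))
      (by omega)
  have h₄ : k * m < n * wraps n k (m + 1) := by rw [mul_comm n]; omega
  have h₅ : n * wraps n k (m + 1) ≤ k * (m + 1) := by rw [mul_comm n]; omega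
  have hk' : (0 : ℚ) < k := by exact_mod_cast hk
  rw [Int.ceil_eq_iff, lt_div_iff₀ hk', div_le_iff₀ hk']
  constructor
  · push_cast
    have : (k * m : ℚ) < n * wraps n k (m + 1) := by exact_mod_cast h₄
    linarith
  · have : (n * wraps n k (m + 1) : ℚ) ≤ k * (m + 1) := by exact_mod_cast h₅
    push_cast
    linarith

end BraidGroup

/-- **Theorem 3.14 (Theorem in the paper).** If `n` and `k` are relatively prime with
`2 ≤ k ≤ n - 1` and `a_i = ⌈n·i/k⌉` for `1 ≤ i ≤ k-1`, then in `B n` the element `δ^k`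
is conjugate to `δ · U_{a_1} ⋯ U_{a_{k-1}}`. -/
theorem delta_pow_conj (n k : ℕ) (hk2 : 2 ≤ k) (hkn : k ≤ n - 1) (hcop : Nat.Coprime n k)
    (a : ℕ → ℕ) (ha : ∀ i, 1 ≤ i → i ≤ k - 1 → (a i : ℤ) = ⌈((n : ℚ) * i) / k⌉) :
    ∃ x : BraidGroup n,
      x⁻¹ * (BraidGroup.delta n) ^ k * x =
        BraidGroup.delta n *
          ((List.range (k - 1)).map (fun j => BraidGroup.U n (a (j + 1)))).prod := by
  have hn : 0 < n := by omega
  have hw := BraidGroup.wraps_self (k := k) hn (by omega)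
  have h := BraidGroup.D_pow_mul_sorter (n := n) (k := k) (m := n - 1) (by omega) a (fun m hm hs => by
    have hle : BraidGroup.wraps n k (m + 1) ≤ k - 1 := by
      have := BraidGroup.wraps_add_le (k := k) (i := m + 1) (j := n - (m + 1)) hn
      rw [Nat.add_sub_cancel' hm, hw] at this
      omega
    have := ha (BraidGroup.wraps n k (m + 1)) (by omega) hle
    rw [BraidGroup.ceil_eq_of_wraps (by omega) hcop hm hs (by omega)] at this
    exact_mod_cast this) (by omega)
  rw [BraidGroup.sorter, Nat.sub_add_cancel hn, hw, BraidGroup.rank_self hn (by omega) hcop,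
    BraidGroup.S_self, one_mul] at h
  refine ⟨BraidGroup.sorter n k (n - 1), ?_⟩
  rw [mul_assoc, inv_mul_eq_iff_eq_mul, ← mul_assoc,
    BraidGroup.sorter_mul_delta (by omega), mul_assoc, ← h, ← mul_assoc, BraidGroup.delta,
    ← pow_succ', Nat.sub_add_cancel (by omega)]
end

section
/- Let n and k be relatively prime integers with 2 ≤ k ≤ n−1. For 1 ≤ i ≤ k−1 set a_i = ⌈n·i/k⌉ and r_i = k·a_i − n·i. Then for each i, k·(a_i − 1) + 1 ≡ n + r_i − k + 1 (mod n) and n − k + 2 ≤ n + r_i − k + 1 ≤ n; consequently the map i ↦ n + r_i − k + 1 is a bijection from {1,…,k−1} onto {n−k+2, n−k+3, …, n}. -/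
/-- The gap between `m` and the next multiple of `k` is the residue of `-m` modulo `k`. -/
theorem mul_ceil_div_sub_eq_neg_emod (m : ℤ) (k : ℕ) :
    (k : ℤ) * ⌈(m : ℚ) / k⌉ - m = -m % k := by
  rw [Rat.ceil_intCast_div_natCast, mul_neg, Int.emod_def]
  ring

/-- Let `n, k` be relatively prime with `2 ≤ k ≤ n - 1`, and for `1 ≤ i ≤ k - 1` set
`a_i = ⌈n·i/k⌉` and `r_i = k·a_i − n·i`. Then for each such `i`,
`k·(a_i − 1) + 1 ≡ n + r_i − k + 1 (mod n)` and `n − k + 2 ≤ n + r_i − k + 1 ≤ n`;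
moreover `i ↦ n + r_i − k + 1` is a bijection from `{1,…,k-1}` onto `{n−k+2,…,n}`. -/
theorem shifted_remainder_bijection (n k : ℕ) (hk2 : 2 ≤ k) (hkn : k ≤ n - 1)
    (hcop : Nat.Coprime n k) (a r : ℕ → ℤ)
    (ha : ∀ i, a i = ⌈((n : ℚ) * i) / k⌉)
    (hr : ∀ i, r i = k * a i - n * i) :
    (∀ i : ℕ, 1 ≤ i → i ≤ k - 1 →
      (k * (a i - 1) + 1) ≡ ((n : ℤ) + r i - k + 1) [ZMOD (n : ℤ)] ∧
      (n : ℤ) - k + 2 ≤ (n : ℤ) + r i - k + 1 ∧ (n : ℤ) + r i - k + 1 ≤ (n : ℤ)) ∧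
    (∀ i j : ℕ, 1 ≤ i → i ≤ k - 1 → 1 ≤ j → j ≤ k - 1 →
      (n : ℤ) + r i - k + 1 = (n : ℤ) + r j - k + 1 → i = j) ∧
    (∀ t : ℤ, (n : ℤ) - k + 2 ≤ t → t ≤ (n : ℤ) →
      ∃ i : ℕ, 1 ≤ i ∧ i ≤ k - 1 ∧ (n : ℤ) + r i - k + 1 = t) := by
  have hk0 : (0 : ℤ) < k := by omega
  have hr_emod (i : ℕ) : r i = -((n : ℤ) * i) % k := by
    rw [← mul_ceil_div_sub_eq_neg_emod, hr, ha]
    push_cast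
    rfl
  have hcop' : IsCoprime (k : ℤ) (n : ℤ) := (Nat.isCoprime_iff_coprime.2 hcop).symm
  have hr_nonneg (i : ℕ) : 0 ≤ r i := hr_emod i ▸ Int.emod_nonneg _ hk0.ne'
  have hr_lt (i : ℕ) : r i < k := hr_emod i ▸ Int.emod_lt_of_pos _ hk0
  refine ⟨fun i hi hik => ⟨?_, ?_, ?_⟩, fun i j hi hik hj hjk hij => ?_, fun t ht htn => ?_⟩
  · refine Int.modEq_iff_dvd.2 ⟨1 - i, ?_⟩
    rw [hr]
    ring
  · have hne : r i ≠ 0 := by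
      intro h0
      have hdvd : (k : ℤ) ∣ n * i := ⟨a i, by linarith [hr i]⟩
      have hle := Int.le_of_dvd (by omega) (hcop'.dvd_of_dvd_mul_left hdvd)
      omega
    have := hr_nonneg i
    omega
  · have := hr_lt i
    omega
  · have hdvd : (k : ℤ) ∣ n * ((i : ℤ) - j) := ⟨a i - a j, by linarith [hr i, hr j]⟩
    have := Int.eq_zero_of_abs_lt_dvd (hcop'.dvd_of_dvd_mul_left hdvd)
      (abs_lt.2 ⟨by omega, by omega⟩)
    omega
  · obtain ⟨v, u, huv⟩ := hcop'
    obtain ⟨s, hs⟩ : ∃ s : ℤ, s = t - n + k - 1 := ⟨_, rfl⟩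
    have hi_nonneg := Int.emod_nonneg (-(u * s)) hk0.ne'
    have hi_lt := Int.emod_lt_of_pos (-(u * s)) hk0
    have hdiv := Int.emod_add_mul_ediv (-(u * s)) k
    obtain ⟨i, hi⟩ := Int.eq_ofNat_of_zero_le hi_nonneg
    rw [hi] at hdiv hi_lt
    have hri : r i = s := by
      rw [hr_emod, ← Int.emod_eq_of_lt (by omega : 0 ≤ s) (by omega : s < k)]
      refine Int.modEq_iff_dvd.2 ⟨s * v - n * (-(u * s) / k), ?_⟩
      linear_combination (-s) * huv + (n : ℤ) * hdiv
    have hi0 : i ≠ 0 := by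
      rintro rfl
      have := hr_emod 0
      simp at this
      omega
    exact ⟨i, by omega, by omega, by omega⟩
end

section
/- Let n ≥ 1, p = 2n+1, and let π = (n+1, n, …, 1) ⊙ (a_2, a_4, …, a_{2n}) be a strongly braided petal permutation of length p. Then for every 1 ≤ k ≤ n, the stabilization s_k(π) is a strongly braided petal permutation of length p+2, namely s_k(π) = (n+2, n+1, …, 1) ⊙ (a_2+1, a_4+1, …, a_{2(n−k+1)}+1, 2n+3, a_{2(n−k+2)}+1, …, a_{2n}+1); i.e., the sequence of even-position entries of s_k(π) is obtained from (a_2, a_4, …, a_{2n}) by increasing each term by 1 and then inserting p+2 = 2n+3 at the k-th position from the right. -/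
/-- Interleaving of sequences: `(x_1,…,x_{m+1}) ⊙ (y_1,…,y_m) =
(x_1, y_1, x_2, y_2, …, x_m, y_m, x_{m+1})`. -/
def interleave : List ℕ → List ℕ → List ℕ
  | x :: xs, y :: ys => x :: y :: interleave xs ys
  | xs, [] => xs
  | [], _ :: _ => []

/-- The descending sequence `(m, m-1, …, 2, 1)`. -/
def desc (m : ℕ) : List ℕ := (List.range m).reverse.map (· + 1)

/-- The stabilization `s_k` at `k` of a petal permutation of length `p`: each entry
`a ≤ k` with `a ≠ k` is kept, each entry `a > k` is replaced by `a + 1`, and the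
(unique) entry equal to `k` is replaced by the three entries `(k+1, p+2, k)`. -/
def stab (k p : ℕ) (π : List ℕ) : List ℕ :=
  π.flatMap (fun a => if a = k then [k + 1, p + 2, k] else if a ≤ k then [a] else [a + 1])

theorem desc_succ (m : ℕ) : desc (m + 1) = (m + 1) :: desc m := by
  simp [desc, List.range_succ]

theorem mem_desc {m a : ℕ} : a ∈ desc m ↔ 1 ≤ a ∧ a ≤ m := by
  induction m with
  | zero => simp [desc]; omega
  | succ m ih => rw [desc_succ, List.mem_cons, ih]; omega

theorem nodup_desc (m : ℕ) : (desc m).Nodup := by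
  induction m with
  | zero => simp [desc]
  | succ m ih => simp [desc_succ, mem_desc, ih]

theorem interleave_perm_append :
    ∀ {xs ys : List ℕ}, ys.length ≤ xs.length → (interleave xs ys).Perm (xs ++ ys)
  | x :: xs, y :: ys, h => by
    have ih := interleave_perm_append (xs := xs) (ys := ys) (by simpa using h)
    simp only [interleave, List.cons_append]
    exact ((ih.cons y).trans List.perm_middle.symm).cons x
  | [], [], _ => by simp [interleave]
  | _ :: _, [], _ => by simp [interleave]
  | [], _ :: _, h => by simp at h

theorem stab_cons_self (k p : ℕ) (l : List ℕ) :
    stab k p (k :: l) = (k + 1) :: (p + 2) :: k :: stab k p l := by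
  simp [stab]

theorem stab_cons_of_lt {k a : ℕ} (p : ℕ) (l : List ℕ) (h : a < k) :
    stab k p (a :: l) = a :: stab k p l := by
  simp [stab, h.ne, h.le]

theorem stab_cons_of_gt {k a : ℕ} (p : ℕ) (l : List ℕ) (h : k < a) :
    stab k p (a :: l) = (a + 1) :: stab k p l := by
  simp [stab, h.ne', h.not_ge]

theorem stab_desc_of_lt {k m : ℕ} (p : ℕ) (h : m < k) : stab k p (desc m) = desc m := by
  induction m with
  | zero => simp [stab, desc]
  | succ m ih => rw [desc_succ, stab_cons_of_lt p _ h, ih (by omega)]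

theorem stab_desc_perm {k m : ℕ} (p : ℕ) (hk : 1 ≤ k) (h : k ≤ m) :
    (stab k p (desc m)).Perm ((p + 2) :: desc (m + 1)) := by
  induction m, h using Nat.le_induction with
  | base =>
    obtain ⟨j, rfl⟩ : ∃ j, k = j + 1 := ⟨k - 1, by omega⟩
    rw [desc_succ (j + 1), desc_succ j, stab_cons_self, stab_desc_of_lt p (by omega)]
    exact List.Perm.swap _ _ _
  | succ m h ih =>
    rw [desc_succ (m + 1), desc_succ m, stab_cons_of_gt p _ (by omega), ← desc_succ m]
    exact (ih.cons _).trans (List.Perm.swap _ _ _)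

theorem stab_interleave_desc_of_lt {k : ℕ} (p : ℕ) :
    ∀ {b : List ℕ}, b.length + 1 < k → (∀ a ∈ b, k < a) →
      stab k p (interleave (desc (b.length + 1)) b) =
        interleave (desc (b.length + 1)) (b.map (· + 1))
  | [], h, _ => by simpa [interleave] using stab_desc_of_lt p h
  | y :: ys, h, hb => by
    rw [List.length_cons] at h ⊢
    rw [desc_succ, List.map_cons, interleave, interleave, stab_cons_of_lt p _ h,
      stab_cons_of_gt p _ (hb y (by simp)),
      stab_interleave_desc_of_lt p (by omega) fun a ha => hb a (by simp [ha])]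

theorem stab_interleave_desc {k : ℕ} (p : ℕ) (hk : 1 ≤ k) :
    ∀ {b : List ℕ}, k ≤ b.length + 1 → (∀ a ∈ b, k < a) →
      stab k p (interleave (desc (b.length + 1)) b) =
        interleave (desc (b.length + 2))
          ((b.take (b.length + 1 - k)).map (· + 1) ++ [p + 2] ++
            (b.drop (b.length + 1 - k)).map (· + 1))
  | [], h, _ => by
    obtain rfl : k = 1 := by simp at h; omega
    simp [interleave, desc, stab, List.range_succ]
  | y :: ys, h, hb => by
    have hy : k < y := hb y (by simp)
    have hys : ∀ a ∈ ys, k < a := fun a ha => hb a (by simp [ha])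
    rw [List.length_cons] at h ⊢
    obtain rfl | hlt := h.eq_or_lt
    · rw [desc_succ (ys.length + 1 + 1), desc_succ (ys.length + 1), interleave, stab_cons_self,
        stab_cons_of_gt p _ hy, stab_interleave_desc_of_lt p (by omega) hys]
      simp [interleave]
    · have hsub : ys.length + 1 + 1 - k = (ys.length + 1 - k) + 1 := by omega
      rw [desc_succ (ys.length + 1 + 1), desc_succ (ys.length + 1), interleave,
        stab_cons_of_gt p _ hlt, stab_cons_of_gt p _ hy,
        stab_interleave_desc p hk (by omega) hys, hsub, ← desc_succ (ys.length + 1)]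
      simp [interleave]

theorem lt_of_interleave_desc_perm {m N : ℕ} {b : List ℕ} (hb : b.length ≤ m)
    (h : (interleave (desc m) b).Perm (desc N)) {a : ℕ} (ha : a ∈ b) : m < a := by
  have happ : (desc m ++ b).Perm (desc N) :=
    (interleave_perm_append (by simpa [desc] using hb)).symm.trans h
  have hpos : 1 ≤ a := (mem_desc.1 (happ.subset (List.mem_append_right _ ha))).1
  have hdisj := List.disjoint_of_nodup_append (happ.nodup_iff.2 (nodup_desc N))
  by_contra hle
  exact hdisj (mem_desc.2 ⟨hpos, by omega⟩) ha

/-- **Lemma (stabilization of strongly braided petal permutations).**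
Let `n ≥ 1`, `p = 2n+1`, and let `π = (n+1, n, …, 1) ⊙ (a_2, a_4, …, a_{2n})` be a
strongly braided petal permutation of length `p` (a bijection of `{1,…,p}`). Then for
`1 ≤ k ≤ n`, the stabilization `s_k(π)` is the strongly braided petal permutation of
length `p+2` whose even-position entries are obtained from `(a_2, a_4, …, a_{2n})` by
increasing each term by `1` and inserting `p + 2 = 2n + 3` at the `k`-th position from
the right. -/
theorem stab_strongly_braided (n k : ℕ) (hn : 1 ≤ n) (hk1 : 1 ≤ k) (hkn : k ≤ n)
    (b : List ℕ) (hb : b.length = n)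
    (hperm : (interleave (desc (n + 1)) b).Perm (desc (2 * n + 1))) :
    stab k (2 * n + 1) (interleave (desc (n + 1)) b) =
      interleave (desc (n + 2))
        ((b.take (n - k + 1)).map (· + 1) ++ [2 * n + 3] ++
          (b.drop (n - k + 1)).map (· + 1)) ∧
    (stab k (2 * n + 1) (interleave (desc (n + 1)) b)).Perm (desc (2 * n + 3)) := by
  subst hb
  refine ⟨?_, ?_⟩
  · have hlt : ∀ a ∈ b, k < a := fun a ha => by
      have := lt_of_interleave_desc_perm (by omega) hperm ha
      omega
    rw [stab_interleave_desc _ hk1 (by omega) hlt, Nat.sub_add_comm hkn]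
  · rw [desc_succ (2 * b.length + 2)]
    exact (hperm.flatMap_right _).trans (stab_desc_perm _ hk1 (by omega))
end
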